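/- (Moen: Coifman–Fefferman type estimate for multilinear fractional integrals) Suppose 0<α<mn. Then for every w ∈ A_∞ and all 0<s<∞ there is a constant C (depending on w, s, α, m, n) such that ∫_{ℝ^n} |I_α(f⃗)(x)|^s w(x) dx ≤ C ∫_{ℝ^n} M_α(f⃗)(x)^s w(x) dx for all f⃗=(f_1,…,f_m) with each f_i bounded with compact support. -/

import Mathlib

open MeasureTheory ENNReal Set

noncomputable section

/-- Euclidean space `ℝ^n`. -/
abbrev ESp (n : ℕ) := EuclideanSpace ℝ (Fin n)

/-- An axis-parallel cube with positive finite side length. -/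
def IsCube {n : ℕ} (Q : Set (ESp n)) : Prop :=
  ∃ (c : Fin n → ℝ) (h : ℝ), 0 < h ∧ Q = {x : ESp n | ∀ i, c i ≤ x i ∧ x i ≤ c i + h}

/-- The measure `w(E) = ∫_E w` associated to a weight `w`. -/
def wMeas {n : ℕ} (w : ESp n → ℝ) (E : Set (ESp n)) : ℝ≥0∞ :=
  ∫⁻ x in E, ENNReal.ofReal (w x)

/-- A weight: a nonnegative locally integrable function, positive (and finite) a.e. -/
def IsWeight {n : ℕ} (w : ESp n → ℝ) : Prop :=
  Measurable w ∧ (∀ x, 0 ≤ w x) ∧ (∀ᵐ x ∂(volume : Measure (ESp n)), 0 < w x) ∧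
    ∀ Q : Set (ESp n), IsCube Q → wMeas w Q < ⊤

/-- `C` is an admissible `A₁` constant for `w`. -/
def A1Const {n : ℕ} (w : ESp n → ℝ) (C : ℝ≥0∞) : Prop :=
  ∀ Q : Set (ESp n), IsCube Q →
    (volume Q)⁻¹ * wMeas w Q ≤ C * essInf (fun x => ENNReal.ofReal (w x)) (volume.restrict Q)

/-- The Muckenhoupt class `A₁`. -/
def IsA1 {n : ℕ} (w : ESp n → ℝ) : Prop := ∃ C : ℝ≥0∞, C < ⊤ ∧ A1Const w C

/-- The Muckenhoupt class `A_p`, `1 < p < ∞`. -/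
def IsAp {n : ℕ} (w : ESp n → ℝ) (p : ℝ) : Prop :=
  ∃ C : ℝ≥0∞, C < ⊤ ∧ ∀ Q : Set (ESp n), IsCube Q →
    ((volume Q)⁻¹ * wMeas w Q) *
      ((volume Q)⁻¹ * ∫⁻ x in Q, ENNReal.ofReal (w x) ^ (1 - p / (p - 1))) ^ (p - 1) ≤ C

/-- The class `A_∞ = ⋃_{p ≥ 1} A_p`. -/
def IsAinfty {n : ℕ} (w : ESp n → ℝ) : Prop :=
  IsA1 w ∨ ∃ p : ℝ, 1 < p ∧ IsAp w p

/-- The Hardy–Littlewood maximal function (over cubes). -/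
def maxFn {n : ℕ} (f : ESp n → ℝ) (x : ESp n) : ℝ≥0∞ :=
  ⨆ (Q : Set (ESp n)) (_ : IsCube Q) (_ : x ∈ Q),
    (volume Q)⁻¹ * ∫⁻ y in Q, ENNReal.ofReal |f y|

/-- The Fujii–Wilson `A_∞` constant. -/
def FW {n : ℕ} (w : ESp n → ℝ) : ℝ≥0∞ :=
  ⨆ (Q : Set (ESp n)) (_ : IsCube Q),
    (wMeas w Q)⁻¹ * ∫⁻ x in Q, maxFn (Q.indicator w) x

/-- The weighted weak `L^{q,∞}(w)` quasinorm of `g`. -/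
def wnorm {n : ℕ} (g : ESp n → ℝ≥0∞) (q : ℝ) (w : ESp n → ℝ) : ℝ≥0∞ :=
  ⨆ (t : ℝ) (_ : 0 < t), ENNReal.ofReal t * (wMeas w {x | ENNReal.ofReal t < g x}) ^ (1 / q)

/-- The weighted `L¹(w)` norm. -/
def L1norm {n : ℕ} (f : ESp n → ℝ) (w : ESp n → ℝ) : ℝ≥0∞ :=
  ∫⁻ x, ENNReal.ofReal (|f x| * w x)

/-- The fractional maximal operator `M_α`. -/
def fracM {n : ℕ} (α : ℝ) (f : ESp n → ℝ) (x : ESp n) : ℝ≥0∞ :=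
  ⨆ (Q : Set (ESp n)) (_ : IsCube Q) (_ : x ∈ Q),
    ((volume Q) ^ (1 - α / (n : ℝ)))⁻¹ * ∫⁻ y in Q, ENNReal.ofReal |f y|

/-- The fractional integral (Riesz potential) `I_α`. -/
def fracI {n : ℕ} (α : ℝ) (f : ESp n → ℝ) (x : ESp n) : ℝ :=
  ∫ y, f y / dist x y ^ ((n : ℝ) - α)

/-- The multi(sub)linear maximal function `𝓜`. -/
def multiM {n m : ℕ} (f : Fin m → ESp n → ℝ) (x : ESp n) : ℝ≥0∞ :=
  ⨆ (Q : Set (ESp n)) (_ : IsCube Q) (_ : x ∈ Q),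
    ∏ i, (volume Q)⁻¹ * ∫⁻ y in Q, ENNReal.ofReal |f i y|

/-- The multi(sub)linear fractional maximal operator `𝓜_α`. -/
def multiMα {n m : ℕ} (α : ℝ) (f : Fin m → ESp n → ℝ) (x : ESp n) : ℝ≥0∞ :=
  ⨆ (Q : Set (ESp n)) (_ : IsCube Q) (_ : x ∈ Q),
    ∏ i, ((volume Q) ^ (1 - α / ((m : ℝ) * (n : ℝ))))⁻¹ * ∫⁻ y in Q, ENNReal.ofReal |f i y|

/-- The multilinear fractional integral `𝓘_α`. -/
def multiIα {n m : ℕ} (α : ℝ) (f : Fin m → ESp n → ℝ) (x : ESp n) : ℝ :=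
  ∫ y : Fin m → ESp n, (∏ i, f i (y i)) / (∑ i, dist x (y i)) ^ ((m : ℝ) * (n : ℝ) - α)

/-- The multilinear class `A_{(1,…,1)}`. -/
def A11 {n m : ℕ} (w : Fin m → ESp n → ℝ) : Prop :=
  ∃ C : ℝ≥0∞, C < ⊤ ∧ ∀ Q : Set (ESp n), IsCube Q →
    ((volume Q)⁻¹ * ∫⁻ x in Q, ENNReal.ofReal (∏ i, w i x ^ ((m : ℝ)⁻¹))) ^ (m : ℝ) *
      ∏ i, (essInf (fun x => ENNReal.ofReal (w i x)) (volume.restrict Q))⁻¹ ≤ C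



lemma cf_sum_rpow_le {s : ℝ} (hs : 0 < s) (hs1 : s ≤ 1) (F : Finset ℤ) (a : ℤ → ℝ≥0∞) :
    (∑ k ∈ F, a k) ^ s ≤ ∑ k ∈ F, a k ^ s := by
  classical
  induction F using Finset.induction_on with
  | empty => simp [hs]
  | insert k F hk ih =>
    rw [Finset.sum_insert hk, Finset.sum_insert hk]
    exact (ENNReal.rpow_add_le_add_rpow _ _ hs.le hs1).trans (by gcongr)

lemma cf_tsum_rpow_le {s : ℝ} (hs : 0 < s) (hs1 : s ≤ 1) (a : ℤ → ℝ≥0∞) :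
    (∑' k, a k) ^ s ≤ ∑' k, a k ^ s := by
  rw [← ENNReal.le_rpow_inv_iff hs, ENNReal.tsum_eq_iSup_sum]
  refine iSup_le fun F => ?_
  rw [ENNReal.le_rpow_inv_iff hs]
  exact (cf_sum_rpow_le hs hs1 F a).trans (ENNReal.sum_le_tsum F)

lemma cf_step {s : ℝ} (hs : 1 ≤ s) (T a : ℝ≥0∞) :
    (T + a) ^ s ≤ T ^ s + ENNReal.ofReal s * (a * (T + a) ^ (s - 1)) := by
  have hs0 : 0 < s := by linarith
  rcases eq_or_ne T ⊤ with rfl | hT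
  · simp [hs0]
  rcases eq_or_ne a ⊤ with rfl | ha
  · rcases eq_or_lt_of_le hs with rfl | h
    · simp
    · simp [hs0, sub_pos.2 h, ENNReal.mul_top, ENNReal.ofReal_eq_zero, not_le.2 hs0]
  rcases eq_or_ne (T + a) 0 with h0 | h0
  · rw [h0]; simp [hs0]
  lift T to NNReal using hT
  lift a to NNReal using ha
  have hu : 0 < (T : ℝ) + a := by
    have : 0 < T + a := pos_iff_ne_zero.2 (by exact_mod_cast h0)
    exact_mod_cast this
  have e1 : (T : ℝ≥0∞) + a = ENNReal.ofReal ((T : ℝ) + a) := by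
    rw [ENNReal.ofReal_add T.coe_nonneg a.coe_nonneg]; simp
  have e2 : (T : ℝ≥0∞) = ENNReal.ofReal T := by simp
  have e3 : (a : ℝ≥0∞) = ENNReal.ofReal a := by simp
  rw [e1, e2, e3, ENNReal.ofReal_rpow_of_pos hu, ENNReal.ofReal_rpow_of_pos hu,
    ENNReal.ofReal_rpow_of_nonneg T.coe_nonneg hs0.le, ← ENNReal.ofReal_mul a.coe_nonneg,
    ← ENNReal.ofReal_mul hs0.le, ← ENNReal.ofReal_add (by positivity) (by positivity)]
  apply ENNReal.ofReal_le_ofReal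
  set u := (T : ℝ) + a with hu_def
  have hb := one_add_mul_self_le_rpow_one_add (s := (T : ℝ) / u - 1)
    (by have : 0 ≤ (T : ℝ) / u := by positivity
        linarith) hs
  rw [add_sub_cancel, Real.div_rpow T.coe_nonneg hu.le, le_div_iff₀ (by positivity)] at hb
  have e4 : u ^ s = u ^ (s - 1) * u := by
    rw [← Real.rpow_add_one hu.ne']; ring_nf
  have e5 : ((T : ℝ) / u - 1) * u = - a := by
    field_simp; rw [hu_def]; ring
  have : (1 + s * ((T : ℝ) / u - 1)) * u ^ s = u ^ s - s * (a * u ^ (s - 1)) := by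
    calc _ = u ^ s + s * (((T : ℝ) / u - 1) * u) * u ^ (s - 1) := by rw [e4]; ring
      _ = _ := by rw [e5]; ring
  linarith

lemma cf_telescope {s : ℝ} (hs : 1 ≤ s) (b : ℕ → ℝ≥0∞) (N : ℕ) :
    (∑ t ∈ Finset.range N, b t) ^ s ≤
      ENNReal.ofReal s * ∑ t ∈ Finset.range N,
        b t * (∑ u ∈ Finset.range (t + 1), b u) ^ (s - 1) := by
  induction N with
  | zero => simp [show 0 < s by linarith]
  | succ N ih =>
    rw [Finset.sum_range_succ, Finset.sum_range_succ _ N, mul_add]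
    refine (cf_step hs _ _).trans ?_
    rw [← Finset.sum_range_succ]
    gcongr

/-- pointwise summation over good levels -/
lemma cf_good_sum {s : ℝ} (hs : 0 < s) (L q : ℝ≥0∞) (hL : 1 ≤ L)
    (a : ℤ → ℝ≥0∞) (F : Finset ℤ)
    (hF : ∀ k ∈ F, ∀ d : ℕ, a (k - (d + 1 : ℕ)) ≤ L * q ^ (d + 1) * a k) :
    ∑ k ∈ F, a k ^ s ≤ L ^ s * (1 - q ^ s)⁻¹ * (⨆ k, a k) ^ s := by
  classical
  rcases F.eq_empty_or_nonempty with rfl | hne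
  · simp
  set k0 := F.max' hne
  have hk0 : k0 ∈ F := F.max'_mem hne
  have hle : ∀ k ∈ F, k ≤ k0 := fun k hk => F.le_max' k hk
  have hb : ∀ k ∈ F, a k ^ s ≤ (L ^ s * (⨆ k, a k) ^ s) * (q ^ s) ^ (k0 - k).toNat := by
    intro k hk
    have h1 : a k ≤ L * q ^ (k0 - k).toNat * ⨆ k, a k := by
      rcases (hle k hk).eq_or_lt with heq | hlt
      · rw [heq]
        simp only [sub_self, Int.toNat_zero, pow_zero, mul_one]
        calc a k0 ≤ 1 * ⨆ k, a k := by rw [one_mul]; exact le_iSup a k0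
          _ ≤ _ := by gcongr
      · obtain ⟨d, hd⟩ : ∃ d : ℕ, k = k0 - (d + 1 : ℕ) := ⟨(k0 - k - 1).toNat, by omega⟩
        have := hF k0 hk0 d
        rw [← hd] at this
        have h2 : (k0 - k).toNat = d + 1 := by omega
        rw [h2]
        refine this.trans ?_
        gcongr
        exact le_iSup a k0
    calc a k ^ s ≤ (L * q ^ (k0 - k).toNat * ⨆ k, a k) ^ s := by gcongr
      _ = _ := by
        rw [ENNReal.mul_rpow_of_nonneg _ _ hs.le, ENNReal.mul_rpow_of_nonneg _ _ hs.le,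
          ← ENNReal.rpow_natCast_mul, ← ENNReal.rpow_mul_natCast, mul_comm s]
        ring
  calc ∑ k ∈ F, a k ^ s ≤ ∑ k ∈ F, (L ^ s * (⨆ k, a k) ^ s) * (q ^ s) ^ (k0 - k).toNat :=
        Finset.sum_le_sum hb
    _ = (L ^ s * (⨆ k, a k) ^ s) * ∑ k ∈ F, (q ^ s) ^ (k0 - k).toNat := by
        rw [Finset.mul_sum]
    _ = (L ^ s * (⨆ k, a k) ^ s) * ∑ d ∈ F.image (fun k => (k0 - k).toNat), (q ^ s) ^ d := by
        rw [Finset.sum_image]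
        intro x hx y hy hxy
        have := hle x hx
        have := hle y hy
        simp only at hxy
        omega
    _ ≤ (L ^ s * (⨆ k, a k) ^ s) * ∑' d : ℕ, (q ^ s) ^ d := by
        gcongr; exact ENNReal.sum_le_tsum _
    _ = _ := by rw [ENNReal.tsum_geometric]; ring

lemma cf_level {X ι : Type*} [MeasurableSpace X] [MeasurableSpace ι] [Countable ι]
    [MeasurableSingletonClass ι] (ν : Measure X) (ix : X → ι) (hix : Measurable ix)
    (G : Set X) (_hG : MeasurableSet G) (C : ℝ≥0∞)
    (hC : ∀ z, ν (ix ⁻¹' {z}) ≤ C * ν (ix ⁻¹' {z} ∩ G))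
    (h : X → ℝ≥0∞) (hh : ∀ x x', ix x = ix x' → h x = h x') :
    ∫⁻ x, h x ∂ν ≤ C * ∫⁻ x in G, h x ∂ν := by
  obtain ⟨φ, rfl⟩ := (Function.factorsThrough_iff (f := ix) h).1 (fun x x' e => hh x x' e)
  have hφ : Measurable φ := measurable_of_countable φ
  have e1 : ∫⁻ x, (φ ∘ ix) x ∂ν = ∑' z, φ z * ν (ix ⁻¹' {z}) := by
    simp only [Function.comp_apply]
    rw [← lintegral_map (μ := ν) hφ hix, lintegral_countable']
    congr 1; ext z; rw [Measure.map_apply hix (measurableSet_singleton z)]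
  have e2 : ∫⁻ x in G, (φ ∘ ix) x ∂ν = ∑' z, φ z * ν (ix ⁻¹' {z} ∩ G) := by
    simp only [Function.comp_apply]
    rw [← lintegral_map (μ := ν.restrict G) hφ hix, lintegral_countable']
    congr 1; ext z; rw [Measure.map_apply hix (measurableSet_singleton z),
      Measure.restrict_apply (hix (measurableSet_singleton z))]
  rw [e1, e2, ← ENNReal.tsum_mul_left]
  refine ENNReal.tsum_le_tsum fun z => ?_
  calc φ z * ν (ix ⁻¹' {z}) ≤ φ z * (C * ν (ix ⁻¹' {z} ∩ G)) := by gcongr; exact hC z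
    _ = _ := by ring

lemma cf_absorb {s : ℝ} (hs : 1 < s) (X Y K : ℝ≥0∞) (hX : X ≠ ⊤)
    (h : X ≤ K * (X ^ ((s - 1) / s) * Y ^ (1 / s))) : X ≤ K ^ s * Y := by
  have hs0 : 0 < s := by linarith
  rcases eq_or_ne X 0 with rfl | hX0
  · simp
  have e : X = X ^ (1 / s) * X ^ ((s - 1) / s) := by
    rw [← ENNReal.rpow_add _ _ hX0 hX]
    have : 1 / s + (s - 1) / s = 1 := by field_simp; ring
    rw [this, ENNReal.rpow_one]
  have hp0 : X ^ ((s - 1) / s) ≠ 0 := by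
    simp [hX0, hX]
  have hpt : X ^ ((s - 1) / s) ≠ ⊤ := by
    refine ENNReal.rpow_ne_top_of_nonneg (div_nonneg (by linarith) hs0.le) hX
  have h2 : X ^ (1 / s) * X ^ ((s - 1) / s) ≤ (K * Y ^ (1 / s)) * X ^ ((s - 1) / s) := by
    rw [← e]; refine h.trans (le_of_eq (by ring))
  have h3 : X ^ (1 / s) ≤ K * Y ^ (1 / s) := (ENNReal.mul_le_mul_iff_left hp0 hpt).1 h2
  calc X = (X ^ (1 / s)) ^ s := by rw [← ENNReal.rpow_mul, one_div, inv_mul_cancel₀ hs0.ne', ENNReal.rpow_one]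
    _ ≤ (K * Y ^ (1 / s)) ^ s := by gcongr
    _ = _ := by rw [ENNReal.mul_rpow_of_nonneg _ _ hs0.le, ← ENNReal.rpow_mul, one_div, inv_mul_cancel₀ hs0.ne', ENNReal.rpow_one]

/-- abstract core -/
theorem cf_core {X ι : Type*} [MeasurableSpace X] [MeasurableSpace ι] [Countable ι]
    [MeasurableSingletonClass ι] (ν : Measure X) (ix : ℤ → X → ι)
    (hix : ∀ k, Measurable (ix k))
    (hnest : ∀ k (d : ℕ) x x', ix k x = ix k x' → ix (k + d) x = ix (k + d) x')
    (L q C : ℝ≥0∞) (hL : 1 ≤ L) (hLt : L ≠ ⊤) (hq : q < 1) (hCt : C ≠ ⊤) {s : ℝ} (hs : 0 < s) :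
    ∃ K : ℝ≥0∞, K < ⊤ ∧ ∀ (A : ℤ → ι → ℝ≥0∞) (G : ℤ → Set X), (∀ k, MeasurableSet (G k)) →
      (∀ k, ∀ x ∈ G k, ∀ d : ℕ, A (k - (d + 1 : ℕ)) (ix (k - (d + 1 : ℕ)) x) ≤
        L * q ^ (d + 1) * A k (ix k x)) →
      (∀ k z, ν (ix k ⁻¹' {z}) ≤ C * ν (ix k ⁻¹' {z} ∩ G k)) →
      ∫⁻ x, (∑' k, A k (ix k x)) ^ s ∂ν ≤ K * ∫⁻ x, (⨆ k, A k (ix k x)) ^ s ∂ν := by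
  classical
  have hqr : ∀ r : ℝ, 0 < r → L ^ r * (1 - q ^ r)⁻¹ ≠ ⊤ := by
    intro r hr
    refine ENNReal.mul_ne_top (ENNReal.rpow_ne_top_of_nonneg hr.le hLt) ?_
    rw [Ne, ENNReal.inv_eq_top, tsub_eq_zero_iff_le, not_le]
    exact ENNReal.rpow_lt_one hq hr
  have key : ∀ r : ℝ, 0 < r → ∀ (A : ℤ → ι → ℝ≥0∞) (G : ℤ → Set X),
      (∀ k, ∀ x ∈ G k, ∀ d : ℕ, A (k - (d + 1 : ℕ)) (ix (k - (d + 1 : ℕ)) x) ≤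
        L * q ^ (d + 1) * A k (ix k x)) → ∀ (F : Finset ℤ) x,
      ∑ k ∈ F, (G k).indicator (fun x => A k (ix k x) ^ r) x ≤
        L ^ r * (1 - q ^ r)⁻¹ * (⨆ k, A k (ix k x)) ^ r := by
    intro r hr A G hG F x
    have := cf_good_sum hr L q hL (fun k => A k (ix k x)) (F.filter (fun k => x ∈ G k))
      (fun k hk d => hG k x (Finset.mem_filter.1 hk).2 d)
    refine le_trans (le_of_eq ?_) this
    rw [Finset.sum_filter]
    refine Finset.sum_congr rfl fun k _ => ?_
    simp [Set.indicator_apply]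
  rcases le_or_gt s 1 with hs1 | hs1
  · refine ⟨C * (L ^ s * (1 - q ^ s)⁻¹), (ENNReal.mul_ne_top hCt (hqr s hs)).lt_top, ?_⟩
    intro A G hGm hG hC
    have hm : ∀ k, Measurable fun x => A k (ix k x) :=
      fun k => (measurable_of_countable (A k)).comp (hix k)
    calc ∫⁻ x, (∑' k, A k (ix k x)) ^ s ∂ν ≤ ∫⁻ x, ∑' k, A k (ix k x) ^ s ∂ν :=
          lintegral_mono fun x => cf_tsum_rpow_le hs hs1 _
      _ = ∑' k, ∫⁻ x, A k (ix k x) ^ s ∂ν :=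
          lintegral_tsum fun k => ((hm k).pow_const s).aemeasurable
      _ ≤ ∑' k, C * ∫⁻ x in G k, A k (ix k x) ^ s ∂ν :=
          ENNReal.tsum_le_tsum fun k => cf_level ν (ix k) (hix k) (G k) (hGm k) C (hC k) _
            (fun x x' h => by rw [h])
      _ = C * ∫⁻ x, ∑' k, (G k).indicator (fun x => A k (ix k x) ^ s) x ∂ν := by
          rw [ENNReal.tsum_mul_left, lintegral_tsum]
          · congr 2; ext k; rw [lintegral_indicator (hGm k)]
          · exact fun k => (((hm k).pow_const s).indicator (hGm k)).aemeasurable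
      _ ≤ C * ∫⁻ x, L ^ s * (1 - q ^ s)⁻¹ * (⨆ k, A k (ix k x)) ^ s ∂ν := by
          gcongr with x
          rw [ENNReal.tsum_eq_iSup_sum]
          exact iSup_le fun F => key s hs A G hG F x
      _ = _ := by rw [lintegral_const_mul' _ _ (hqr s hs)]; ring
  · have h1 := hqr 1 one_pos
    set D := L ^ (1:ℝ) * (1 - q ^ (1:ℝ))⁻¹ with hD
    set K := ENNReal.ofReal s * (C * D) with hK
    have hKt : K ≠ ⊤ := ENNReal.mul_ne_top ENNReal.ofReal_ne_top (ENNReal.mul_ne_top hCt h1)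
    refine ⟨K ^ s + 1, ?_, ?_⟩
    · exact ENNReal.add_lt_top.2 ⟨(ENNReal.rpow_ne_top_of_nonneg hs.le hKt).lt_top, by simp⟩
    intro A G hGm hG hC
    have hm : ∀ k, Measurable fun x => A k (ix k x) :=
      fun k => (measurable_of_countable (A k)).comp (hix k)
    set Y := ∫⁻ x, (⨆ k, A k (ix k x)) ^ s ∂ν with hY
    rcases eq_or_ne Y ⊤ with hYt | hYt
    · rw [hYt, ENNReal.mul_top (by simp)]; exact le_top
    set S : ℕ → X → ℝ≥0∞ := fun N x => ∑ t ∈ Finset.range (2 * N + 1),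
      A ((N : ℤ) - t) (ix ((N : ℤ) - t) x) with hS
    have hSm : ∀ N, Measurable (S N) := fun N => Finset.measurable_sum _ (fun t _ => hm _)
    -- bound for each truncation
    have main : ∀ N, ∫⁻ x, S N x ^ s ∂ν ≤ K ^ s * Y := by
      intro N
      set b : ℕ → X → ℝ≥0∞ := fun t x => A ((N : ℤ) - t) (ix ((N : ℤ) - t) x) with hb
      have hbm : ∀ t, Measurable (b t) := fun t => hm _
      have hfin : ∫⁻ x, S N x ^ s ∂ν ≠ ⊤ := by
        have : ∫⁻ x, S N x ^ s ∂ν ≤ ((2 * N + 1 : ℕ) : ℝ≥0∞) ^ s * Y := by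
          rw [hY, ← lintegral_const_mul' _ _ (ENNReal.rpow_ne_top_of_nonneg hs.le (ENNReal.natCast_ne_top _))]
          refine lintegral_mono fun x => ?_
          rw [← ENNReal.mul_rpow_of_nonneg _ _ hs.le]
          refine ENNReal.rpow_le_rpow ?_ hs.le
          refine (Finset.sum_le_card_nsmul (Finset.range (2 * N + 1)) (fun t : ℕ => b t x) (⨆ k, A k (ix k x)) (fun t _ =>
            le_iSup (fun k => A k (ix k x)) ((N : ℤ) - t))).trans ?_
          simp
        refine ne_top_of_le_ne_top ?_ this
        exact ENNReal.mul_ne_top (ENNReal.rpow_ne_top_of_nonneg hs.le (ENNReal.natCast_ne_top _)) hYt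
      refine cf_absorb hs1 _ _ _ hfin ?_
      have hT : ∀ t, Measurable fun x => b t x * (∑ u ∈ Finset.range (t + 1), b u x) ^ (s - 1) :=
        fun t => (hbm t).mul ((Finset.measurable_sum _ fun u _ => hbm u).pow_const _)
      calc ∫⁻ x, S N x ^ s ∂ν ≤ ∫⁻ x, ENNReal.ofReal s * ∑ t ∈ Finset.range (2 * N + 1),
            b t x * (∑ u ∈ Finset.range (t + 1), b u x) ^ (s - 1) ∂ν :=
            lintegral_mono fun x => cf_telescope hs1.le (fun t => b t x) _
        _ = ENNReal.ofReal s * ∑ t ∈ Finset.range (2 * N + 1), ∫⁻ x,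
            b t x * (∑ u ∈ Finset.range (t + 1), b u x) ^ (s - 1) ∂ν := by
            rw [lintegral_const_mul' _ _ ENNReal.ofReal_ne_top, lintegral_finsetSum]
            exact fun t _ => hT t
        _ ≤ ENNReal.ofReal s * ∑ t ∈ Finset.range (2 * N + 1), C * ∫⁻ x in G ((N : ℤ) - t),
            b t x * (∑ u ∈ Finset.range (t + 1), b u x) ^ (s - 1) ∂ν := by
            gcongr with t ht
            refine cf_level ν (ix ((N : ℤ) - t)) (hix _) _ (hGm _) C (hC _) _ ?_
            intro x x' h
            have hu : ∀ u ∈ Finset.range (t + 1), b u x = b u x' := by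
              intro u hu
              have hu' : u ≤ t := by simpa [Nat.lt_succ_iff] using hu
              have := hnest ((N : ℤ) - t) (t - u) x x' h
              have e : ((N : ℤ) - t) + (t - u : ℕ) = (N : ℤ) - u := by omega
              rw [e] at this
              simp only [hb, this]
            rw [Finset.sum_congr rfl hu, hu t (by simp)]
        _ = ENNReal.ofReal s * (C * ∫⁻ x, ∑ t ∈ Finset.range (2 * N + 1),
            (G ((N : ℤ) - t)).indicator (fun x =>
            b t x * (∑ u ∈ Finset.range (t + 1), b u x) ^ (s - 1)) x ∂ν) := by
            rw [lintegral_finsetSum _ (fun t _ => (hT t).indicator (hGm _)), ← Finset.mul_sum]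
            congr 3; ext t; rw [lintegral_indicator (hGm _)]
        _ ≤ ENNReal.ofReal s * (C * ∫⁻ x, D * (S N x ^ (s - 1) * ⨆ k, A k (ix k x)) ∂ν) := by
            gcongr with x
            have k1 := key 1 one_pos A G hG
              ((Finset.range (2 * N + 1)).image (fun t : ℕ => (N : ℤ) - t)) x
            rw [Finset.sum_image (by intro t _ u _ h; simpa using h), ENNReal.rpow_one] at k1
            simp only [ENNReal.rpow_one] at k1
            calc _ ≤ ∑ t ∈ Finset.range (2 * N + 1), S N x ^ (s - 1) *
                  (G ((N : ℤ) - t)).indicator (fun x => A ((N : ℤ) - t) (ix ((N : ℤ) - t) x)) x := by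
                  refine Finset.sum_le_sum fun t ht => ?_
                  by_cases hx : x ∈ G ((N : ℤ) - t)
                  · rw [Set.indicator_of_mem hx, Set.indicator_of_mem hx, mul_comm]
                    have : ∑ u ∈ Finset.range (t + 1), b u x ≤ S N x := by
                      refine Finset.sum_le_sum_of_subset ?_
                      intro u hu
                      simp only [Finset.mem_range] at *
                      omega
                    gcongr
                  · simp [Set.indicator_of_notMem hx]
              _ = S N x ^ (s - 1) * _ := by rw [← Finset.mul_sum]
              _ ≤ S N x ^ (s - 1) * (D * ⨆ k, A k (ix k x)) := by
                  gcongr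
                  simpa [hD] using k1
              _ = _ := by ring
        _ = K * ∫⁻ x, (S N x ^ (s - 1) * ⨆ k, A k (ix k x)) ∂ν := by
            rw [lintegral_const_mul' _ _ h1, hK]; ring
        _ ≤ K * ((∫⁻ x, S N x ^ s ∂ν) ^ ((s - 1) / s) * Y ^ (1 / s)) := by
            gcongr
            have hc : (s / (s - 1)).HolderConjugate s :=
              (Real.HolderConjugate.conjExponent hs1).symm
            have := ENNReal.lintegral_mul_le_Lp_mul_Lq ν hc
              (f := fun x => S N x ^ (s - 1)) (g := fun x => ⨆ k, A k (ix k x))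
              ((hSm N).pow_const _).aemeasurable (Measurable.iSup hm).aemeasurable
            refine this.trans (le_of_eq ?_)
            congr 2
            · congr 1; ext x
              rw [← ENNReal.rpow_mul, mul_div_cancel₀ _ (by linarith : s - 1 ≠ 0)]
            · rw [one_div_div]
    have hsup : ∀ x, (∑' k, A k (ix k x)) ^ s = ⨆ N, S N x ^ s := by
      intro x
      have e : ∑' k, A k (ix k x) = ⨆ N, S N x := by
        rw [ENNReal.tsum_eq_iSup_sum' (fun N : ℕ =>
          (Finset.range (2 * N + 1)).image (fun t : ℕ => (N : ℤ) - t))]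
        · congr 1; ext N
          rw [Finset.sum_image (by intro t _ u _ h; simpa using h)]
        · intro F
          refine ⟨∑ k ∈ F, k.natAbs, fun k hk => ?_⟩
          have : k.natAbs ≤ ∑ k ∈ F, k.natAbs :=
            Finset.single_le_sum (f := fun k : ℤ => k.natAbs) (fun _ _ => Nat.zero_le _) hk
          refine Finset.mem_image.2 ⟨(((∑ k ∈ F, k.natAbs : ℕ) : ℤ) - k).toNat, ?_, ?_⟩
          · rw [Finset.mem_range]; omega
          · omega
      rw [e]
      exact (ENNReal.orderIsoRpow s hs).map_iSup _
    have hmono : Monotone S := by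
      refine monotone_nat_of_le_succ fun N x => ?_
      have : S (N + 1) x = A ((N + 1 : ℕ) : ℤ) (ix ((N + 1 : ℕ) : ℤ) x) + S N x +
          A (-((N + 1 : ℕ) : ℤ)) (ix (-((N + 1 : ℕ) : ℤ)) x) := by
        simp only [hS]
        rw [show 2 * (N + 1) + 1 = (2 * N + 1 + 1) + 1 by ring, Finset.sum_range_succ,
          Finset.sum_range_succ']
        have e1 : ((N + 1 : ℕ) : ℤ) - ((2 * N + 1 + 1 : ℕ) : ℤ) = -((N + 1 : ℕ) : ℤ) := by
          push_cast; ring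
        have e2 : ∀ t : ℕ, ((N + 1 : ℕ) : ℤ) - ((t + 1 : ℕ) : ℤ) = (N : ℤ) - t := by
          intro t; push_cast; ring
        rw [e1]
        simp only [e2]
        simp only [Nat.cast_zero, sub_zero]
        ring
      rw [this]
      exact le_add_right le_add_self
    simp_rw [hsup]
    rw [lintegral_iSup (fun N => (hSm N).pow_const s)
      (fun N M h x => ENNReal.rpow_le_rpow (hmono h x) hs.le)]
    refine iSup_le fun N => (main N).trans ?_
    gcongr
    exact le_self_add

lemma cf_meas_coord {n : ℕ} (j : Fin n) : Measurable fun x : ESp n => x j := by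
  fun_prop

lemma cf_vol_cube {n : ℕ} (c : Fin n → ℝ) (h : ℝ) :
    volume {x : ESp n | ∀ i, c i ≤ x i ∧ x i ≤ c i + h} = ENNReal.ofReal h ^ n := by
  have := (EuclideanSpace.volume_preserving_symm_measurableEquiv_toLp (Fin n)).measure_preimage
    (s := Set.Icc c (fun i => c i + h)) measurableSet_Icc.nullMeasurableSet
  rw [Real.volume_Icc_pi] at this
  simp only [add_sub_cancel_left, Finset.prod_const, Finset.card_univ, Fintype.card_fin] at this
  rw [← this]
  congr 1
  ext x
  simp [Set.mem_Icc, Pi.le_def, forall_and]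

def cfix {n : ℕ} (k : ℤ) (x : ESp n) : Fin n → ℤ := fun j => ⌊x j / (2:ℝ) ^ k⌋

lemma cfix_meas {n : ℕ} (k : ℤ) : Measurable (cfix (n := n) k) := by
  refine measurable_pi_iff.2 fun j => ?_
  exact Int.measurable_floor.comp ((cf_meas_coord j).div_const _)

lemma cfix_eq_iff {n : ℕ} (k : ℤ) (x : ESp n) (z : Fin n → ℤ) :
    cfix k x = z ↔ ∀ j, (2:ℝ) ^ k * z j ≤ x j ∧ x j < (2:ℝ) ^ k * z j + (2:ℝ) ^ k := by
  have h2 : (0:ℝ) < 2 ^ k := by positivity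
  rw [funext_iff]
  refine forall_congr' fun j => ?_
  rw [cfix, Int.floor_eq_iff, le_div_iff₀ h2, div_lt_iff₀ h2]
  constructor <;> rintro ⟨h, h'⟩ <;> constructor <;> nlinarith

lemma cf_vol_P {n : ℕ} (k : ℤ) (z : Fin n → ℤ) :
    volume (cfix (n := n) k ⁻¹' {z}) = ENNReal.ofReal ((2:ℝ) ^ k) ^ n := by
  have := (EuclideanSpace.volume_preserving_symm_measurableEquiv_toLp (Fin n)).measure_preimage
    (s := Set.univ.pi fun i => Set.Ico ((2:ℝ) ^ k * z i) ((2:ℝ) ^ k * z i + (2:ℝ) ^ k))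
    (MeasurableSet.univ_pi fun i => measurableSet_Ico).nullMeasurableSet
  rw [Real.volume_pi_Ico] at this
  simp only [add_sub_cancel_left, Finset.prod_const, Finset.card_univ, Fintype.card_fin] at this
  rw [← this]
  congr 1
  ext x
  simp only [mem_preimage, mem_singleton_iff, cfix_eq_iff]
  simp [Set.mem_pi]

lemma cfix_nest {n : ℕ} (k : ℤ) (d : ℕ) (x x' : ESp n) (h : cfix k x = cfix k x') :
    cfix (k + d) x = cfix (k + d) x' := by
  have key : ∀ y : ESp n, ∀ j, cfix (k + d) y j = cfix k y j / ((2 ^ d : ℕ) : ℤ) := by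
    intro y j
    rw [cfix, cfix, ← Int.floor_div_natCast, div_div, zpow_add₀ (by norm_num)]
    simp
  ext j
  rw [key, key, h]

def cfB {n : ℕ} (k : ℤ) (z : Fin n → ℤ) : Set (ESp n) :=
  {y | ∀ j, (2:ℝ) ^ k * (z j - 1) ≤ y j ∧ y j ≤ (2:ℝ) ^ k * (z j - 1) + 3 * (2:ℝ) ^ k}

lemma cf_cube_meas {n : ℕ} (c : Fin n → ℝ) (h : ℝ) :
    MeasurableSet {x : ESp n | ∀ i, c i ≤ x i ∧ x i ≤ c i + h} := by
  have : {x : ESp n | ∀ i, c i ≤ x i ∧ x i ≤ c i + h} =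
    ⋂ i, {x : ESp n | c i ≤ x i} ∩ {x : ESp n | x i ≤ c i + h} := by
    ext x; simp [forall_and]
  rw [this]
  exact MeasurableSet.iInter fun i => (measurableSet_le measurable_const (cf_meas_coord i)).inter
    (measurableSet_le (cf_meas_coord i) measurable_const)

lemma cfB_cube {n : ℕ} (k : ℤ) (z : Fin n → ℤ) : IsCube (cfB k z) :=
  ⟨fun j => (2:ℝ) ^ k * (z j - 1), 3 * (2:ℝ) ^ k, by positivity, rfl⟩

lemma cfB_meas {n : ℕ} (k : ℤ) (z : Fin n → ℤ) : MeasurableSet (cfB k z) :=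
  cf_cube_meas (fun j => (2:ℝ) ^ k * (z j - 1)) (3 * (2:ℝ) ^ k)

lemma cfB_vol {n : ℕ} (k : ℤ) (z : Fin n → ℤ) :
    volume (cfB k z) = ENNReal.ofReal (3 * (2:ℝ) ^ k) ^ n :=
  cf_vol_cube (fun j => (2:ℝ) ^ k * (z j - 1)) (3 * (2:ℝ) ^ k)

lemma cfB_ball {n : ℕ} (k : ℤ) (x y : ESp n) (h : ∀ j, |y j - x j| ≤ (2:ℝ) ^ k) :
    y ∈ cfB k (cfix k x) := by
  intro j
  have h1 := (cfix_eq_iff k x _).1 rfl j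
  have h2 := abs_le.1 (h j)
  constructor <;> nlinarith

lemma cfB_near {n : ℕ} (k : ℤ) (x y : ESp n) (h : y ∈ cfB k (cfix k x)) (j : Fin n) :
    |y j - x j| ≤ 2 * (2:ℝ) ^ k := by
  have h1 := (cfix_eq_iff k x _).1 rfl j
  have h2 := h j
  rw [abs_le]
  constructor <;> nlinarith

lemma cf_two (k : ℤ) : ENNReal.ofReal ((2:ℝ) ^ k) = (2:ℝ≥0∞) ^ (k : ℝ) := by
  rw [← Real.rpow_intCast, ← ENNReal.ofReal_rpow_of_pos (by norm_num)]
  simp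

lemma cf_lintegral_pi {E : Type*} [MeasureSpace E] [SigmaFinite (volume : Measure E)] {m : ℕ}
    (f : Fin m → E → ℝ≥0∞) (hf : ∀ i, Measurable (f i)) :
    ∫⁻ x : Fin m → E, ∏ i, f i (x i) = ∏ i, ∫⁻ x, f i x := by
  induction m with
  | zero => simp [volume_pi]
  | succ m ih =>
    have h := (volume_preserving_piFinSuccAbove (fun _ : Fin (m + 1) => E) 0).symm
    have hpm : Measurable fun x : Fin (m + 1) → E => ∏ i, f i (x i) :=
      Finset.measurable_prod _ fun i _ => (hf i).comp (measurable_pi_apply i)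
    rw [← h.lintegral_comp hpm]
    simp_rw [MeasurableEquiv.piFinSuccAbove_symm_apply, Fin.insertNthEquiv,
            Fin.prod_univ_succ, Fin.insertNth_zero, Equiv.coe_fn_mk, Fin.cons_succ,
            Fin.cons_zero]
    rw [← ih _ (fun i => hf _), Measure.volume_eq_prod]
    exact lintegral_prod_mul (hf 0).aemeasurable
      (Finset.measurable_prod _ fun i _ => (hf _).comp (measurable_pi_apply i)).aemeasurable

def cfA {n m : ℕ} (γ : ℝ) (g : Fin m → ESp n → ℝ≥0∞) (k : ℤ) (z : Fin n → ℤ) : ℝ≥0∞ :=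
  (2:ℝ≥0∞) ^ (-(k:ℝ) * γ) * ∏ l, ∫⁻ y in cfB k z, g l y

/-- doubling-type consequence of `A_∞` -/
lemma cf_Ainf {n : ℕ} (w : ESp n → ℝ) (hw : IsWeight w) (hA : IsAinfty w) :
    ∃ C : ℝ≥0∞, C ≠ ⊤ ∧ ∀ Q F : Set (ESp n), IsCube Q → F ⊆ Q → MeasurableSet F →
      volume Q ≤ 2 * volume F → wMeas w Q ≤ C * wMeas w F := by
  have hv : ∀ Q : Set (ESp n), IsCube Q → volume Q ≠ 0 ∧ volume Q ≠ ⊤ := by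
    rintro Q ⟨c, h, hh, rfl⟩
    rw [cf_vol_cube]
    exact ⟨pow_ne_zero _ (by simpa using hh), by finiteness⟩
  obtain ⟨hwm, hw0, hwp, hwf⟩ := hw
  set W : ESp n → ℝ≥0∞ := fun x => ENNReal.ofReal (w x) with hW
  have hWm : Measurable W := hwm.ennreal_ofReal
  rcases hA with ⟨C, hC, hA⟩ | ⟨p, hp, C, hC, hA⟩
  · refine ⟨2 * C, by finiteness, fun Q F hQ hFQ hF hvol => ?_⟩
    obtain ⟨v0, vt⟩ := hv Q hQ
    set e := essInf W (volume.restrict Q) with he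
    have h1 : e * volume F ≤ wMeas w F := by
      calc e * volume F = ∫⁻ _ in F, e := by simp
        _ ≤ _ := by
          refine lintegral_mono_ae ?_
          exact ae_restrict_of_ae_restrict_of_subset hFQ (ae_essInf_le (f := W))
    have h2 := hA Q hQ
    calc wMeas w Q = volume Q * ((volume Q)⁻¹ * wMeas w Q) := by
          rw [← mul_assoc, ENNReal.mul_inv_cancel v0 vt, one_mul]
      _ ≤ (2 * volume F) * (C * e) := by gcongr
      _ = (2 * C) * (e * volume F) := by ring
      _ ≤ _ := by gcongr
  · refine ⟨2 ^ p * C, ?_, fun Q F hQ hFQ hF hvol => ?_⟩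
    · exact ENNReal.mul_ne_top (ENNReal.rpow_ne_top_of_nonneg (by linarith) (by simp)) hC.ne
    obtain ⟨v0, vt⟩ := hv Q hQ
    have hp0 : 0 < p := by linarith
    have hp1 : 0 < p - 1 := by linarith
    set σ := ∫⁻ x in Q, W x ^ (1 - p / (p - 1)) with hσ
    set v := volume Q
    have h2 : wMeas w Q * σ ^ (p - 1) ≤ C * v ^ p := by
      have := hA Q hQ
      rw [ENNReal.mul_rpow_of_nonneg _ _ hp1.le] at this
      calc wMeas w Q * σ ^ (p - 1) = (v⁻¹ * wMeas w Q * (v⁻¹ ^ (p - 1) * σ ^ (p - 1))) * v ^ p := by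
            have e : v⁻¹ * v⁻¹ ^ (p - 1) * v ^ p = 1 := by
              rw [ENNReal.inv_rpow, ← ENNReal.rpow_neg_one, ← ENNReal.rpow_neg,
                ← ENNReal.rpow_add _ _ v0 vt, ← ENNReal.rpow_add _ _ v0 vt]
              ring_nf; simp
            calc _ = wMeas w Q * σ ^ (p - 1) * (v⁻¹ * v⁻¹ ^ (p - 1) * v ^ p) := by rw [e, mul_one]
              _ = _ := by ring
        _ ≤ C * v ^ p := by gcongr
    have h3 : volume F ^ p ≤ wMeas w F * σ ^ (p - 1) := by
      have hc : p.HolderConjugate (p / (p - 1)) := Real.HolderConjugate.conjExponent hp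
      have hH := ENNReal.lintegral_mul_le_Lp_mul_Lq (volume.restrict F) hc
        (f := fun x => W x ^ (1 / p)) (g := fun x => W x ^ (-(1 / p)))
        (hWm.pow_const _).aemeasurable (hWm.pow_const _).aemeasurable
      have e0 : ∫⁻ x in F, ((fun x => W x ^ (1 / p)) * (fun x => W x ^ (-(1 / p)))) x = volume F := by
        have : ∫⁻ x in F, ((fun x => W x ^ (1 / p)) * (fun x => W x ^ (-(1 / p)))) x
            = ∫⁻ x in F, 1 := by
          refine lintegral_congr_ae ?_
          filter_upwards [ae_restrict_of_ae hwp] with x hx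
          have hx0 : W x ≠ 0 := by simp [hW, hx]
          have hxt : W x ≠ ⊤ := by simp [hW]
          simp only [Pi.mul_apply]
          rw [← ENNReal.rpow_add _ _ hx0 hxt]; simp
        rw [this]; simp
      have e1 : ∫⁻ x in F, (W x ^ (1 / p)) ^ p = wMeas w F := by
        refine lintegral_congr fun x => ?_
        rw [← ENNReal.rpow_mul, one_div, inv_mul_cancel₀ hp0.ne', ENNReal.rpow_one]
      have e2 : ∫⁻ x in F, (W x ^ (-(1 / p))) ^ (p / (p - 1)) ≤ σ := by
        rw [hσ]
        refine le_trans (le_of_eq ?_) (lintegral_mono_set hFQ)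
        refine lintegral_congr fun x => ?_
        rw [← ENNReal.rpow_mul]
        congr 1
        field_simp
        ring
      rw [e0, e1] at hH
      calc volume F ^ p ≤ (wMeas w F ^ (1 / p) * σ ^ (1 / (p / (p - 1)))) ^ p := by
            gcongr
            refine hH.trans ?_
            gcongr
        _ = _ := by
            rw [ENNReal.mul_rpow_of_nonneg _ _ hp0.le, ← ENNReal.rpow_mul, ← ENNReal.rpow_mul]
            congr 1
            · rw [one_div, inv_mul_cancel₀ hp0.ne', ENNReal.rpow_one]
            · congr 1; field_simp
    have h4 : v ^ p * wMeas w Q ≤ v ^ p * (2 ^ p * C * wMeas w F) := by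
      calc v ^ p * wMeas w Q ≤ (2 * volume F) ^ p * wMeas w Q := by gcongr
        _ = 2 ^ p * volume F ^ p * wMeas w Q := by rw [ENNReal.mul_rpow_of_nonneg _ _ hp0.le]
        _ ≤ 2 ^ p * (wMeas w F * σ ^ (p - 1)) * wMeas w Q := by gcongr
        _ = 2 ^ p * wMeas w F * (wMeas w Q * σ ^ (p - 1)) := by ring
        _ ≤ 2 ^ p * wMeas w F * (C * v ^ p) := by gcongr
        _ = _ := by ring
    refine (ENNReal.mul_le_mul_iff_right ?_ ?_).1 h4
    · simp [ENNReal.rpow_eq_zero_iff, v0, vt]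
    · exact ENNReal.rpow_ne_top_of_nonneg hp0.le vt

lemma cf_tonelli {n : ℕ} (g : ESp n → ℝ≥0∞) (hg : Measurable g) (k i : ℤ) (hik : i < k)
    (z : Fin n → ℤ) :
    ∫⁻ x in cfix k ⁻¹' {z}, ∫⁻ y in cfB i (cfix i x), g y ≤
      ENNReal.ofReal (4 * (2:ℝ) ^ i) ^ n * ∫⁻ y in cfB k z, g y := by
  have h2 : 2 * (2:ℝ) ^ i ≤ 2 ^ k := by
    have : (2:ℝ) ^ (i + 1) ≤ 2 ^ k := zpow_le_zpow_right₀ (by norm_num) (by omega)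
    rw [zpow_add_one₀ (by norm_num)] at this
    linarith
  set U : Set (ESp n × ESp n) := {p | ∀ j, p.2 j - 2 * (2:ℝ) ^ i ≤ p.1 j ∧
    p.1 j ≤ p.2 j - 2 * (2:ℝ) ^ i + 4 * (2:ℝ) ^ i} with hU
  have hUm : MeasurableSet U := by
    have : U = ⋂ j, {p : ESp n × ESp n | p.2 j - 2 * (2:ℝ) ^ i ≤ p.1 j} ∩
        {p | p.1 j ≤ p.2 j - 2 * (2:ℝ) ^ i + 4 * (2:ℝ) ^ i} := by
      ext x; simp [hU, forall_and]
    rw [this]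
    have m1 : ∀ j, Measurable fun p : ESp n × ESp n => p.1 j :=
      fun j => (cf_meas_coord j).comp measurable_fst
    have m2 : ∀ j, Measurable fun p : ESp n × ESp n => p.2 j :=
      fun j => (cf_meas_coord j).comp measurable_snd
    exact MeasurableSet.iInter fun j =>
      (measurableSet_le ((m2 j).sub_const _) (m1 j)).inter
      (measurableSet_le (m1 j) (((m2 j).sub_const _).add_const _))
  set Φ : ESp n → ESp n → ℝ≥0∞ := fun x y => U.indicator (fun _ => 1) (x, y) *
    (cfB k z).indicator g y with hΦ
  have hPm : MeasurableSet (cfix (n := n) k ⁻¹' {z}) := cfix_meas k (measurableSet_singleton z)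
  have hgm : Measurable ((cfB k z).indicator g) := hg.indicator (cfB_meas k z)
  have hm : Measurable (Function.uncurry Φ) := by
    refine Measurable.mul ?_ (hgm.comp measurable_snd)
    exact measurable_const.indicator hUm
  calc ∫⁻ x in cfix k ⁻¹' {z}, ∫⁻ y in cfB i (cfix i x), g y
      ≤ ∫⁻ x in cfix k ⁻¹' {z}, ∫⁻ y, Φ x y := by
        refine setLIntegral_mono' hPm fun x hx => ?_
        rw [← lintegral_indicator (cfB_meas _ _)]
        refine lintegral_mono fun y => ?_
        by_cases hy : y ∈ cfB i (cfix i x)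
        · have hn := cfB_near i x y hy
          have hyk : y ∈ cfB k z := by
            have hxz : cfix k x = z := hx
            rw [← hxz]
            exact cfB_ball k x y fun j => (hn j).trans h2
          have hyU : (x, y) ∈ U := by
            intro j
            have := abs_le.1 (hn j)
            constructor <;> simp only <;> linarith
          simp [hΦ, Set.indicator_of_mem hy, Set.indicator_of_mem hyk, Set.indicator_of_mem hyU]
        · simp [Set.indicator_of_notMem hy]
    _ ≤ ∫⁻ x, ∫⁻ y, Φ x y := setLIntegral_le_lintegral _ _
    _ = ∫⁻ y, ∫⁻ x, Φ x y := lintegral_lintegral_swap hm.aemeasurable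
    _ = ∫⁻ y, ENNReal.ofReal (4 * (2:ℝ) ^ i) ^ n * (cfB k z).indicator g y := by
        refine lintegral_congr fun y => ?_
        have hs : MeasurableSet {x : ESp n | ∀ j, y j - 2 * (2:ℝ) ^ i ≤ x j ∧
            x j ≤ y j - 2 * (2:ℝ) ^ i + 4 * (2:ℝ) ^ i} :=
          cf_cube_meas (fun j => y j - 2 * (2:ℝ) ^ i) _
        have : ∀ x, Φ x y = {x : ESp n | ∀ j, y j - 2 * (2:ℝ) ^ i ≤ x j ∧
            x j ≤ y j - 2 * (2:ℝ) ^ i + 4 * (2:ℝ) ^ i}.indicator (fun _ => 1) x *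
              (cfB k z).indicator g y := by
          intro x; simp only [hΦ, hU, Set.indicator_apply, Set.mem_ofPred_eq]
        simp_rw [this]
        rw [lintegral_mul_const _ (measurable_const.indicator hs), lintegral_indicator hs]
        rw [setLIntegral_one, cf_vol_cube (fun j => y j - 2 * (2:ℝ) ^ i)]
    _ = _ := by
        rw [lintegral_const_mul _ hgm, lintegral_indicator (cfB_meas k z)]

lemma cf_decay {n m : ℕ} (hm : 0 < m) (α : ℝ) (g : Fin m → ESp n → ℝ≥0∞)
    (hg : ∀ l, Measurable (g l)) (k : ℤ) (d : ℕ) (z : Fin n → ℤ) :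
    ∫⁻ x in cfix k ⁻¹' {z}, cfA ((m:ℝ) * n - α) g (k - (d + 1 : ℕ)) (cfix (k - (d + 1 : ℕ)) x)
        ^ (1 / (m:ℝ)) ≤
      4 ^ n * ((2:ℝ≥0∞) ^ (-(α / (2 * m)))) ^ (d + 1) * ((2:ℝ≥0∞) ^ (-(α / (2 * m)))) ^ (d + 1) *
        volume (cfix (n := n) k ⁻¹' {z}) * cfA ((m:ℝ) * n - α) g k z ^ (1 / (m:ℝ)) := by
  have hm' : (0:ℝ) < m := by exact_mod_cast hm
  have hm1 : (0:ℝ) ≤ 1 / m := by positivity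
  set i : ℤ := k - (d + 1 : ℕ) with hi
  set γ := (m:ℝ) * n - α with hγ
  have hIm : ∀ l, Measurable fun x : ESp n => ∫⁻ y in cfB i (cfix i x), g l y := fun l =>
    (measurable_of_countable (fun z => ∫⁻ y in cfB i z, g l y)).comp (cfix_meas i)
  have e : ∀ (k : ℤ) z, cfA γ g k z ^ (1 / (m:ℝ)) = (2:ℝ≥0∞) ^ (-(k:ℝ) * γ * (1 / m)) *
      ∏ l, (∫⁻ y in cfB k z, g l y) ^ (1 / (m:ℝ)) := by
    intro k z
    rw [cfA, ENNReal.mul_rpow_of_nonneg _ _ hm1, ← ENNReal.rpow_mul, ENNReal.prod_rpow_of_nonneg hm1]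
  have t0 : (2:ℝ≥0∞) ≠ 0 := by simp
  have tt : (2:ℝ≥0∞) ≠ ⊤ := by simp
  simp_rw [e]
  rw [lintegral_const_mul _ (Finset.measurable_prod _ fun l _ => (hIm l).pow_const _)]
  calc _ ≤ (2:ℝ≥0∞) ^ (-(i:ℝ) * γ * (1 / m)) * ∏ l : Fin m,
        (∫⁻ x in cfix k ⁻¹' {z}, ∫⁻ y in cfB i (cfix i x), g l y) ^ (1 / (m:ℝ)) := by
        gcongr
        refine ENNReal.lintegral_prod_norm_pow_le Finset.univ (fun l _ => (hIm l).aemeasurable)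
          ?_ (fun _ _ => hm1)
        simp [hm'.ne']
    _ ≤ (2:ℝ≥0∞) ^ (-(i:ℝ) * γ * (1 / m)) * ∏ l : Fin m,
        (ENNReal.ofReal (4 * (2:ℝ) ^ i) ^ n * ∫⁻ y in cfB k z, g l y) ^ (1 / (m:ℝ)) := by
        gcongr with l
        exact cf_tonelli (g l) (hg l) k i (by omega) z
    _ = (2:ℝ≥0∞) ^ (-(i:ℝ) * γ * (1 / m)) * (ENNReal.ofReal (4 * (2:ℝ) ^ i) ^ n *
        ∏ l : Fin m, (∫⁻ y in cfB k z, g l y) ^ (1 / (m:ℝ))) := by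
        congr 1
        simp_rw [ENNReal.mul_rpow_of_nonneg _ _ hm1]
        rw [Finset.prod_mul_distrib]
        congr 1
        rw [Finset.prod_const, Finset.card_univ, Fintype.card_fin, ← ENNReal.rpow_mul_natCast,
          one_div, inv_mul_cancel₀ hm'.ne', ENNReal.rpow_one]
    _ = _ := by
        have e1 : ENNReal.ofReal (4 * (2:ℝ) ^ i) ^ n = 4 ^ n * (2:ℝ≥0∞) ^ ((i:ℝ) * n) := by
          rw [ENNReal.ofReal_mul (by norm_num), cf_two, mul_pow, ENNReal.rpow_mul_natCast]
          simp
        have e2 : ENNReal.ofReal ((2:ℝ) ^ k) ^ n = (2:ℝ≥0∞) ^ ((k:ℝ) * n) := by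
          rw [cf_two, ENNReal.rpow_mul_natCast]
        rw [cf_vol_P, e1, e2, ← ENNReal.rpow_mul_natCast]
        have e3 : (2:ℝ≥0∞) ^ (-(i:ℝ) * γ * (1 / m)) * (2:ℝ≥0∞) ^ ((i:ℝ) * n) =
          (2:ℝ≥0∞) ^ (-(α / (2 * m)) * ((d + 1 : ℕ) : ℝ)) *
          (2:ℝ≥0∞) ^ (-(α / (2 * m)) * ((d + 1 : ℕ) : ℝ)) * (2:ℝ≥0∞) ^ ((k:ℝ) * n) *
          (2:ℝ≥0∞) ^ (-(k:ℝ) * γ * (1 / m)) := by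
          simp only [← ENNReal.rpow_add _ _ t0 tt]
          congr 1
          rw [hi, hγ]
          push_cast
          field_simp
          ring
        calc _ = 4 ^ n * ((2:ℝ≥0∞) ^ (-(i:ℝ) * γ * (1 / m)) * (2:ℝ≥0∞) ^ ((i:ℝ) * n)) *
            ∏ l : Fin m, (∫⁻ y in cfB k z, g l y) ^ (1 / (m:ℝ)) := by ring
          _ = _ := by rw [e3]; ring

lemma cf_bad {n m : ℕ} (hm : 0 < m) (α : ℝ) (hα : 0 < α) :
    ∃ L : ℝ≥0∞, 1 ≤ L ∧ L ≠ ⊤ ∧ ∀ (g : Fin m → ESp n → ℝ≥0∞) (_ : ∀ l, Measurable (g l))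
      (k : ℤ) (z : Fin n → ℤ),
      volume (cfix (n := n) k ⁻¹' {z}) ≤ 2 * volume (cfix (n := n) k ⁻¹' {z} ∩
        {x | ∀ d : ℕ, cfA ((m:ℝ) * n - α) g (k - (d + 1 : ℕ)) (cfix (k - (d + 1 : ℕ)) x) ≤
          L * ((2:ℝ≥0∞) ^ (-(α / 2))) ^ (d + 1) * cfA ((m:ℝ) * n - α) g k (cfix k x)}) := by
  have hm' : (0:ℝ) < m := by exact_mod_cast hm
  have hm1 : (0:ℝ) ≤ 1 / m := by positivity
  have t0 : (2:ℝ≥0∞) ≠ 0 := by simp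
  have tt : (2:ℝ≥0∞) ≠ ⊤ := by simp
  set ρ : ℝ≥0∞ := (2:ℝ≥0∞) ^ (-(α / (2 * m))) with hρ
  have hρ1 : ρ < 1 := ENNReal.rpow_lt_one_of_one_lt_of_neg (by norm_num) (by
    rw [neg_lt_zero]; positivity)
  have hρ0 : ρ ≠ 0 := by simp [hρ]
  have hρt : ρ ≠ ⊤ := hρ1.ne_top
  set H : ℝ≥0∞ := 2 * 4 ^ n * (1 - ρ)⁻¹ with hH
  have h1ρ : 1 - ρ ≠ 0 := (tsub_pos_of_lt hρ1).ne'
  have h1ρt : 1 - ρ ≠ ⊤ := by finiteness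
  have hHt : H ≠ ⊤ := by
    refine ENNReal.mul_ne_top (by finiteness) ?_
    simpa using h1ρ
  have hH1 : 1 ≤ H := by
    have a1 : (1:ℝ≥0∞) ≤ (1 - ρ)⁻¹ := ENNReal.one_le_inv.2 tsub_le_self
    have a2 : (1:ℝ≥0∞) ≤ 4 ^ n := one_le_pow₀ (by norm_num)
    calc (1:ℝ≥0∞) = 1 * 1 * 1 := by simp
      _ ≤ _ := by rw [hH]; gcongr; norm_num
  have hH0 : H ≠ 0 := (zero_lt_one.trans_le hH1).ne'
  refine ⟨H ^ m, one_le_pow₀ hH1, by finiteness, fun g hg k z => ?_⟩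
  set γ := (m:ℝ) * n - α
  set P : Set (ESp n) := cfix (n := n) k ⁻¹' {z} with hP
  have hPm : MeasurableSet P := cfix_meas k (measurableSet_singleton z)
  have ham : ∀ i, Measurable fun x : ESp n => cfA γ g i (cfix i x) := fun i =>
    (measurable_of_countable (cfA γ g i)).comp (cfix_meas i)
  set A := cfA γ g k z with hA
  set q : ℝ≥0∞ := (2:ℝ≥0∞) ^ (-(α / 2)) with hq
  set E : ℕ → Set (ESp n) := fun d => {x | H ^ m * q ^ (d + 1) * A <
    cfA γ g (k - (d + 1 : ℕ)) (cfix (k - (d + 1 : ℕ)) x)} with hE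
  have hEm : ∀ d, MeasurableSet (E d) := fun d => measurableSet_lt measurable_const (ham _)
  have hPv : volume P ≠ ⊤ := by rw [hP, cf_vol_P]; finiteness
  have hEb : ∀ d, volume (P ∩ E d) ≤ (4 ^ n * H⁻¹ * ρ * volume P) * ρ ^ d := by
    intro d
    have hdec : ∫⁻ x in P, cfA γ g (k - (d + 1 : ℕ)) (cfix (k - (d + 1 : ℕ)) x) ^ (1 / (m:ℝ)) ≤
        4 ^ n * ρ ^ (d + 1) * ρ ^ (d + 1) * volume P * A ^ (1 / (m:ℝ)) :=
      cf_decay hm α g hg k d z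
    set a : ESp n → ℝ≥0∞ := fun x => cfA γ g (k - (d + 1 : ℕ)) (cfix (k - (d + 1 : ℕ)) x) with ha
    set thr := H * ρ ^ (d + 1) * A ^ (1 / (m:ℝ)) with hthr
    have hthr' : (H ^ m * q ^ (d + 1) * A) ^ (1 / (m:ℝ)) = thr := by
      rw [ENNReal.mul_rpow_of_nonneg _ _ hm1, ENNReal.mul_rpow_of_nonneg _ _ hm1,
        ← ENNReal.rpow_natCast_mul, mul_one_div_cancel hm'.ne', ENNReal.rpow_one, hthr, hq, hρ,
        ← ENNReal.rpow_mul_natCast, ← ENNReal.rpow_mul_natCast, ← ENNReal.rpow_mul]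
      congr 3
      field_simp
    have hcheb : thr * volume (P ∩ E d) ≤
        4 ^ n * ρ ^ (d + 1) * ρ ^ (d + 1) * volume P * A ^ (1 / (m:ℝ)) := by
      refine le_trans ?_ hdec
      refine le_trans ?_ (mul_meas_ge_le_lintegral₀ ((ham _).pow_const _).aemeasurable thr)
      refine mul_le_mul_right ?_ thr
      rw [inter_comm, ← Measure.restrict_apply (hEm d)]
      refine measure_mono fun x hx => ?_
      have hx' : H ^ m * q ^ (d + 1) * A < a x := hx
      simp only [Set.mem_ofPred_eq]
      rw [← hthr']
      exact ENNReal.rpow_le_rpow hx'.le hm1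
    rcases eq_or_ne A ⊤ with hAt | hAt
    · have : E d = ∅ := by
        ext x
        simp only [hE, hAt, Set.mem_ofPred_eq, Set.mem_empty_iff_false, iff_false, not_lt]
        rw [ENNReal.mul_top]
        · exact le_top
        · refine mul_ne_zero (pow_ne_zero _ hH0) (pow_ne_zero _ ?_)
          simp [hq]
      simp [this]
    rcases eq_or_ne A 0 with hA0 | hA0
    · rw [hA0] at hdec
      rw [ENNReal.zero_rpow_of_pos (by positivity), mul_zero, nonpos_iff_eq_zero,
        lintegral_eq_zero_iff ((ham _).pow_const _)] at hdec
      have : volume (P ∩ E d) = 0 := by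
        rw [inter_comm, ← Measure.restrict_apply (hEm d)]
        rw [Filter.EventuallyEq, ae_iff] at hdec
        refine measure_mono_null (fun x hx => ?_) hdec
        have hx' : H ^ m * q ^ (d + 1) * A < a x := hx
        simp only [Set.mem_ofPred_eq, Pi.zero_apply]
        intro h0
        rw [ENNReal.rpow_eq_zero_iff_of_pos (by positivity)] at h0
        have : a x = 0 := h0
        rw [this] at hx'
        exact not_lt_bot hx'
      rw [this]; exact zero_le
    · have hA1 : A ^ (1 / (m:ℝ)) ≠ 0 := by simp [ENNReal.rpow_eq_zero_iff, hA0, hAt]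
      have hA2 : A ^ (1 / (m:ℝ)) ≠ ⊤ := ENNReal.rpow_ne_top_of_nonneg hm1 hAt
      have ht0 : thr ≠ 0 := mul_ne_zero (mul_ne_zero hH0 (pow_ne_zero _ hρ0)) hA1
      have htt : thr ≠ ⊤ := ENNReal.mul_ne_top (ENNReal.mul_ne_top hHt (by finiteness)) hA2
      refine (ENNReal.mul_le_mul_iff_right ht0 htt).1 (hcheb.trans (le_of_eq ?_))
      rw [hthr]
      calc _ = (H * H⁻¹) * (4 ^ n * ρ ^ (d + 1) * ρ ^ (d + 1) * volume P * A ^ (1 / (m:ℝ))) := by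
            rw [ENNReal.mul_inv_cancel hH0 hHt, one_mul]
        _ = _ := by ring
  set Gk : Set (ESp n) := {x | ∀ d : ℕ, cfA γ g (k - (d + 1 : ℕ)) (cfix (k - (d + 1 : ℕ)) x) ≤
          H ^ m * q ^ (d + 1) * cfA γ g k (cfix k x)} with hGk
  have hcov : P ⊆ (P ∩ Gk) ∪ ⋃ d, (P ∩ E d) := by
    intro x hx
    by_cases hxG : x ∈ Gk
    · exact Or.inl ⟨hx, hxG⟩
    · right
      simp only [hGk, Set.mem_ofPred_eq, not_forall, not_le] at hxG
      obtain ⟨d, hd⟩ := hxG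
      have hxz : cfix k x = z := hx
      rw [hxz] at hd
      exact Set.mem_iUnion.2 ⟨d, hx, hd⟩
  have hbad : volume (⋃ d, (P ∩ E d)) ≤ volume P / 2 := by
    calc volume (⋃ d, (P ∩ E d)) ≤ ∑' d, volume (P ∩ E d) := measure_iUnion_le _
      _ ≤ ∑' d : ℕ, (4 ^ n * H⁻¹ * ρ * volume P) * ρ ^ d := ENNReal.tsum_le_tsum hEb
      _ = (4 ^ n * H⁻¹ * ρ * volume P) * (1 - ρ)⁻¹ := by
          rw [ENNReal.tsum_mul_left, ENNReal.tsum_geometric]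
      _ ≤ (4 ^ n * H⁻¹ * 1 * volume P) * (1 - ρ)⁻¹ := by gcongr
      _ = (2 * (4 ^ n * (1 - ρ)⁻¹) * H⁻¹) * (volume P / 2) := by
          rw [div_eq_mul_inv]
          calc _ = (2 * 2⁻¹) * ((4 ^ n * H⁻¹ * 1 * volume P) * (1 - ρ)⁻¹) := by
                rw [ENNReal.mul_inv_cancel t0 tt, one_mul]
            _ = _ := by ring
      _ = volume P / 2 := by
          rw [← mul_assoc 2, ← hH, ENNReal.mul_inv_cancel hH0 hHt, one_mul]
  have h1 : volume P ≤ volume (P ∩ Gk) + volume P / 2 :=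
    (measure_mono hcov).trans ((measure_union_le _ _).trans (by gcongr))
  have h2 : volume P / 2 ≤ volume (P ∩ Gk) := by
    have h3 : volume P / 2 + volume P / 2 ≤ volume (P ∩ Gk) + volume P / 2 := by
      rwa [ENNReal.add_halves]
    exact (ENNReal.add_le_add_iff_right (by finiteness)).1 h3
  calc volume P = 2 * (volume P / 2) := (ENNReal.mul_div_cancel t0 tt).symm
    _ ≤ _ := by gcongr

lemma cf_pointwise {n m : ℕ} (α : ℝ) (hα : α < (m : ℝ) * (n : ℝ))
    (f : Fin m → ESp n → ℝ) (hf : ∀ i, Measurable (f i)) (x : ESp n) :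
    ENNReal.ofReal |multiIα α f x| ≤ (2:ℝ≥0∞) ^ ((m:ℝ) * n - α) *
      ∑' k, cfA ((m:ℝ) * n - α) (fun l y => ENNReal.ofReal |f l y|) k (cfix k x) := by
  set γ := (m:ℝ) * n - α with hγ
  have hγ0 : 0 < γ := by linarith
  set g : Fin m → ESp n → ℝ≥0∞ := fun l y => ENNReal.ofReal |f l y| with hg
  have hgm : ∀ l, Measurable (g l) := fun l => (hf l).abs.ennreal_ofReal
  have t0 : (2:ℝ≥0∞) ≠ 0 := by simp
  have tt : (2:ℝ≥0∞) ≠ ⊤ := by simp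
  have hgi : ∀ k l, Measurable ((cfB k (cfix k x)).indicator (g l)) :=
    fun k l => (hgm l).indicator (cfB_meas _ _)
  have hpt : ∀ y : Fin m → ESp n, ‖(∏ i, f i (y i)) / (∑ i, dist x (y i)) ^ γ‖ₑ ≤
      ∑' k : ℤ, (2:ℝ≥0∞) ^ γ * ((2:ℝ≥0∞) ^ (-(k:ℝ) * γ) *
        ∏ l, (cfB k (cfix k x)).indicator (g l) (y l)) := by
    intro y
    set r := ∑ i, dist x (y i) with hr
    have hr0 : 0 ≤ r := Finset.sum_nonneg fun i _ => dist_nonneg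
    rcases hr0.eq_or_lt with h0 | hpos
    · rw [← h0, Real.zero_rpow hγ0.ne']; simp
    obtain ⟨k, hk1, hk2⟩ := exists_mem_Ioc_zpow hpos (one_lt_two : (1:ℝ) < 2)
    refine le_trans ?_ (ENNReal.le_tsum (k + 1))
    have hin : ∀ l, y l ∈ cfB (k + 1) (cfix (k + 1) x) := by
      intro l
      refine cfB_ball _ _ _ fun j => ?_
      calc |y l j - x j| = ‖(y l - x) j‖ := by simp
        _ ≤ ‖y l - x‖ := PiLp.norm_apply_le _ _
        _ = dist x (y l) := by rw [dist_comm, dist_eq_norm]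
        _ ≤ r := Finset.single_le_sum (f := fun i => dist x (y i)) (fun i _ => dist_nonneg) (Finset.mem_univ l)
        _ ≤ _ := hk2
    have e1 : ∏ l, (cfB (k + 1) (cfix (k + 1) x)).indicator (g l) (y l) = ∏ l, g l (y l) :=
      Finset.prod_congr rfl fun l _ => Set.indicator_of_mem (hin l) _
    have hk0 : (0:ℝ) < 2 ^ k := by positivity
    rw [e1, Real.enorm_eq_ofReal_abs, abs_div, Finset.abs_prod, abs_of_pos (Real.rpow_pos_of_pos hpos γ)]
    have e2 : ∏ l, g l (y l) = ENNReal.ofReal (∏ l, |f l (y l)|) :=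
      (ENNReal.ofReal_prod_of_nonneg fun l _ => abs_nonneg _).symm
    have e3 : (2:ℝ≥0∞) ^ γ * (2:ℝ≥0∞) ^ (-((k + 1 : ℤ):ℝ) * γ) =
        ENNReal.ofReal (((2:ℝ) ^ k) ^ (-γ)) := by
      rw [← ENNReal.ofReal_rpow_of_pos hk0, cf_two, ← ENNReal.rpow_mul,
        ← ENNReal.rpow_add _ _ t0 tt]
      congr 1; push_cast; ring
    rw [← mul_assoc, e3, e2, ← ENNReal.ofReal_mul (by positivity)]
    apply ENNReal.ofReal_le_ofReal
    rw [div_eq_mul_inv, ← Real.rpow_neg hpos.le, mul_comm]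
    refine mul_le_mul_of_nonneg_right ?_ (Finset.prod_nonneg fun l _ => abs_nonneg _)
    exact Real.rpow_le_rpow_of_nonpos hk0 hk1.le (by linarith)
  calc ENNReal.ofReal |multiIα α f x| = ‖multiIα α f x‖ₑ := (Real.enorm_eq_ofReal_abs _).symm
    _ ≤ ∫⁻ y : Fin m → ESp n, ‖(∏ i, f i (y i)) / (∑ i, dist x (y i)) ^ γ‖ₑ :=
        enorm_integral_le_lintegral_enorm _
    _ ≤ ∫⁻ y : Fin m → ESp n, ∑' k : ℤ, (2:ℝ≥0∞) ^ γ * ((2:ℝ≥0∞) ^ (-(k:ℝ) * γ) *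
        ∏ l, (cfB k (cfix k x)).indicator (g l) (y l)) := lintegral_mono hpt
    _ = ∑' k : ℤ, (2:ℝ≥0∞) ^ γ * ((2:ℝ≥0∞) ^ (-(k:ℝ) * γ) *
        ∏ l, ∫⁻ y, (cfB k (cfix k x)).indicator (g l) y) := by
        have hpm : ∀ k : ℤ, Measurable fun y : Fin m → ESp n =>
            ∏ l, (cfB k (cfix k x)).indicator (g l) (y l) := fun k =>
          Finset.measurable_prod _ fun l _ => (hgi k l).comp (measurable_pi_apply l)
        rw [lintegral_tsum fun k => (((hpm k).const_mul _).const_mul _).aemeasurable]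
        congr 1; ext k
        rw [lintegral_const_mul _ ((hpm k).const_mul _), lintegral_const_mul _ (hpm k),
          cf_lintegral_pi _ (hgi k)]
    _ = _ := by
        rw [ENNReal.tsum_mul_left]
        congr 2; ext k
        rw [cfA]
        congr 2; ext l
        rw [lintegral_indicator (cfB_meas _ _)]

lemma cf_maxbound {n m : ℕ} (hn : 0 < n) (hm : 0 < m) (α : ℝ) (f : Fin m → ESp n → ℝ)
    (x : ESp n) (k : ℤ) :
    cfA ((m:ℝ) * n - α) (fun l y => ENNReal.ofReal |f l y|) k (cfix k x) ≤
      (3:ℝ≥0∞) ^ ((m:ℝ) * n - α) * multiMα α f x := by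
  have hn' : (0:ℝ) < n := by exact_mod_cast hn
  have hm' : (0:ℝ) < m := by exact_mod_cast hm
  have hx : x ∈ cfB k (cfix k x) := cfB_ball k x x fun j => by simp; positivity
  have h1 : ∏ i, ((volume (cfB k (cfix k x))) ^ (1 - α / ((m : ℝ) * (n : ℝ))))⁻¹ *
      ∫⁻ y in cfB k (cfix k x), ENNReal.ofReal |f i y| ≤ multiMα α f x := by
    unfold multiMα
    refine le_iSup_of_le (cfB k (cfix k x)) (le_iSup_of_le (cfB_cube _ _) (le_iSup_of_le hx le_rfl))
  refine le_trans (le_of_eq ?_) (mul_le_mul_right h1 _)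
  rw [cfA, Finset.prod_mul_distrib, ← mul_assoc]
  congr 1
  have tt : (2:ℝ≥0∞) ^ (k:ℝ) ≠ ⊤ := by rw [← cf_two]; exact ENNReal.ofReal_ne_top
  rw [Finset.prod_const, Finset.card_univ, Fintype.card_fin, cfB_vol,
    ENNReal.ofReal_mul (by norm_num), cf_two, ← ENNReal.rpow_neg, ← ENNReal.rpow_natCast_mul,
    ← ENNReal.rpow_mul_natCast]
  have e : (n:ℝ) * -(1 - α / ((m : ℝ) * (n : ℝ))) * m = -((m:ℝ) * n - α) := by
    field_simp
  rw [e, show ENNReal.ofReal 3 = 3 by simp, ENNReal.mul_rpow_of_ne_top (by simp) tt, ← mul_assoc,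
    ← ENNReal.rpow_add _ _ (by simp) (by simp), add_neg_cancel, ENNReal.rpow_zero, one_mul,
    ← ENNReal.rpow_mul]
  congr 1; ring

/-- **Moen: Coifman–Fefferman type estimate for multilinear fractional integrals.**
For `0 < α < mn`, every `w ∈ A_∞` and all `0 < s < ∞` there is a constant `C` with
`∫ |𝓘_α(f⃗)|^s w ≤ C ∫ 𝓜_α(f⃗)^s w` for all `f⃗` with each `fᵢ` bounded with compact
support. -/
theorem Moen_CoifmanFefferman {n m : ℕ} (hn : 0 < n) (hm : 0 < m)
    (α : ℝ) (hα0 : 0 < α) (hα : α < (m : ℝ) * (n : ℝ))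
    (w : ESp n → ℝ) (hw : IsWeight w) (hAinf : IsAinfty w)
    (s : ℝ) (hs : 0 < s) :
    ∃ C : ℝ≥0∞, C < ⊤ ∧
      ∀ f : Fin m → ESp n → ℝ, (∀ i, Measurable (f i)) →
        (∀ i, ∃ B : ℝ, ∀ x, |f i x| ≤ B) → (∀ i, HasCompactSupport (f i)) →
        ∫⁻ x, ENNReal.ofReal (|multiIα α f x| ^ s) * ENNReal.ofReal (w x)
          ≤ C * ∫⁻ x, (multiMα α f x) ^ s * ENNReal.ofReal (w x) := by
  classical
  set γ := (m:ℝ) * n - α with hγ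
  have hγ0 : 0 < γ := by rw [hγ]; linarith
  obtain ⟨C0, hC0, hdoub⟩ := cf_Ainf w hw hAinf
  obtain ⟨L, hL1, hLt, hbad⟩ := cf_bad (n := n) hm α hα0
  set W : ESp n → ℝ≥0∞ := fun x => ENNReal.ofReal (w x) with hW
  have hWm : Measurable W := hw.1.ennreal_ofReal
  set ν := (volume : Measure (ESp n)).withDensity W with hν
  have hq : (2:ℝ≥0∞) ^ (-(α / 2)) < 1 :=
    ENNReal.rpow_lt_one_of_one_lt_of_neg (by norm_num) (by linarith)
  obtain ⟨K, hK, hcore⟩ := cf_core ν (cfix (n := n)) cfix_meas cfix_nest L _ C0 hL1 hLt hq hC0 hs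
  have c1 : ((2:ℝ≥0∞) ^ γ) ^ s ≠ ⊤ :=
    ENNReal.rpow_ne_top_of_nonneg hs.le (ENNReal.rpow_ne_top_of_nonneg hγ0.le (by simp))
  have c2 : ((3:ℝ≥0∞) ^ γ) ^ s ≠ ⊤ :=
    ENNReal.rpow_ne_top_of_nonneg hs.le (ENNReal.rpow_ne_top_of_nonneg hγ0.le (by simp))
  refine ⟨((2:ℝ≥0∞) ^ γ) ^ s * (K * ((3:ℝ≥0∞) ^ γ) ^ s),
    (ENNReal.mul_ne_top c1 (ENNReal.mul_ne_top hK.ne c2)).lt_top, ?_⟩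
  intro f hf _ _
  set g : Fin m → ESp n → ℝ≥0∞ := fun l y => ENNReal.ofReal |f l y| with hg
  have hgm : ∀ l, Measurable (g l) := fun l => (hf l).abs.ennreal_ofReal
  have ham : ∀ i, Measurable fun x : ESp n => cfA γ g i (cfix i x) := fun i =>
    (measurable_of_countable (cfA γ g i)).comp (cfix_meas i)
  set G : ℤ → Set (ESp n) := fun k => {x | ∀ d : ℕ,
    cfA γ g (k - (d + 1 : ℕ)) (cfix (k - (d + 1 : ℕ)) x) ≤
          L * ((2:ℝ≥0∞) ^ (-(α / 2))) ^ (d + 1) * cfA γ g k (cfix k x)} with hG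
  have hGm : ∀ k, MeasurableSet (G k) := by
    intro k
    simp only [hG, Set.ofPred_forall]
    exact MeasurableSet.iInter fun d => measurableSet_le (ham _) ((ham k).const_mul _)
  have hmain := hcore (cfA γ g) G hGm (fun k x hx d => hx d) (by
    intro k z
    have hPm : MeasurableSet (cfix (n := n) k ⁻¹' {z}) := cfix_meas k (measurableSet_singleton z)
    set Q : Set (ESp n) := {x | ∀ j, (2:ℝ) ^ k * z j ≤ x j ∧ x j ≤ (2:ℝ) ^ k * z j + (2:ℝ) ^ k}
      with hQ
    have hQc : IsCube Q := ⟨fun j => (2:ℝ) ^ k * z j, (2:ℝ) ^ k, by positivity, rfl⟩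
    have hPQ : cfix (n := n) k ⁻¹' {z} ⊆ Q := fun x hx j =>
      have h := (cfix_eq_iff k x z).1 hx j
      ⟨h.1, h.2.le⟩
    have hQv : volume Q = volume (cfix (n := n) k ⁻¹' {z}) := by
      rw [cf_vol_P]; exact cf_vol_cube (fun j => (2:ℝ) ^ k * z j) _
    have := hdoub Q (cfix (n := n) k ⁻¹' {z} ∩ G k) hQc (inter_subset_left.trans hPQ)
      (hPm.inter (hGm k)) (by rw [hQv]; exact hbad g hgm k z)
    rw [hν, withDensity_apply _ hPm, withDensity_apply _ (hPm.inter (hGm k))]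
    exact (lintegral_mono_set hPQ).trans this)
  rw [hν, lintegral_withDensity_eq_lintegral_mul _ hWm ((Measurable.tsum ham).pow_const s),
    lintegral_withDensity_eq_lintegral_mul _ hWm ((Measurable.iSup ham).pow_const s)] at hmain
  calc ∫⁻ x, ENNReal.ofReal (|multiIα α f x| ^ s) * W x
      ≤ ∫⁻ x, ((2:ℝ≥0∞) ^ γ) ^ s * (W * fun x => (∑' k, cfA γ g k (cfix k x)) ^ s) x := by
        refine lintegral_mono fun x => ?_
        have h1 := cf_pointwise α hα f hf x
        rw [← ENNReal.ofReal_rpow_of_nonneg (abs_nonneg _) hs.le]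
        calc ENNReal.ofReal |multiIα α f x| ^ s * W x
            ≤ ((2:ℝ≥0∞) ^ γ * ∑' k, cfA γ g k (cfix k x)) ^ s * W x := by gcongr
          _ = _ := by
            rw [ENNReal.mul_rpow_of_nonneg _ _ hs.le, Pi.mul_apply]; ring
    _ = ((2:ℝ≥0∞) ^ γ) ^ s * ∫⁻ x, (W * fun x => (∑' k, cfA γ g k (cfix k x)) ^ s) x :=
        lintegral_const_mul' _ _ c1
    _ ≤ ((2:ℝ≥0∞) ^ γ) ^ s * (K * ∫⁻ x, (W * fun x => (⨆ k, cfA γ g k (cfix k x)) ^ s) x) := by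
        gcongr
    _ ≤ ((2:ℝ≥0∞) ^ γ) ^ s * (K * ∫⁻ x, ((3:ℝ≥0∞) ^ γ) ^ s * ((multiMα α f x) ^ s * W x)) := by
        gcongr with x
        rw [Pi.mul_apply, mul_comm, ← mul_assoc, ← ENNReal.mul_rpow_of_nonneg _ _ hs.le]
        gcongr
        exact iSup_le fun k => cf_maxbound hn hm α f x k
    _ = _ := by
        rw [lintegral_const_mul' _ _ c2]
        ring

end
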